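/- arXiv:1912.10149 — 6 statements merged into one kernel-verified Lean document; each statement's English description precedes it below -/
import Mathlib

section
/- Let A be any nonempty proper subset of the set of all states. Then: (i) there exists at least one admissible transition (S,T) with S ∈ A and T ∉ A, and at least one admissible transition (T,S) with T ∉ A and S ∈ A; and (ii) the function φ satisfies the modified balance equation across A, namely max{ φ(S) − r(S,T) : (S,T) admissible, S ∈ A, T ∉ A } = max{ φ(T) − r(T,S) : (T,S) admissible, T ∉ A, S ∈ A }. -/
/-- The potential function φ(S) = G(S) - Σ_{b∈S} γ_b. -/
noncomputable def phi {B : ℕ} (G : Finset (Fin B) → ℝ) (γ : Fin B → ℝ)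
    (S : Finset (Fin B)) : ℝ :=
  G S - ∑ b ∈ S, γ b

/-- An ordered pair (S,T) of states is an admissible transition if it is upward
(S ⊊ T) or downward (T = S \ {b₀} for some b₀ ∈ S). -/
def Adm {B : ℕ} (S T : Finset (Fin B)) : Prop :=
  S ⊂ T ∨ ∃ b₀ ∈ S, T = S.erase b₀

/-- Resistance of an admissible transition: Σ_{b∈T∖S} γ_b for an upward transition,
G(S) - G(T) for a downward one. -/
noncomputable def res {B : ℕ} (G : Finset (Fin B) → ℝ) (γ : Fin B → ℝ)
    (S T : Finset (Fin B)) : ℝ :=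
  if S ⊂ T then ∑ b ∈ T \ S, γ b else G S - G T

/-!
For states `U ⊂ V`, the value of `φ - r` at a transition between `U` and `V` equals
`G U - ∑ b ∈ V, γ b`: it does not depend on the direction of the transition, and it can only grow
when `U` is enlarged or `V` is shrunk. An upward transition crossing the boundary of `A` may jump by
several elements and hence need not be reversible, but some one-element step between its endpoints
crosses the boundary in the same direction. That step is reversible and its value is at least as
large, so the values in each direction across the boundary are dominated by those in the other.
-/

theorem exists_covBy_notMem_of_le {α : Type*} [PartialOrder α] [WellFoundedLT α]
    [IsStronglyCoatomic α] {A : Set α} {a b : α} (hab : a ≤ b) (ha : a ∈ A) (hb : b ∉ A) :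
    ∃ u ∈ A, ∃ v ∉ A, u ⋖ v ∧ a ≤ u ∧ v ≤ b := by
  obtain ⟨v, hvb, ⟨hav, hvA⟩, hmin⟩ :=
    exists_minimal_le_of_wellFoundedLT (fun v ↦ a ≤ v ∧ v ∉ A) b ⟨hab, hb⟩
  have hav' : a < v := hav.lt_of_ne (ne_of_mem_of_not_mem ha hvA)
  obtain ⟨u, hau, huv⟩ := exists_le_covBy_of_lt hav'
  have huA : u ∈ A := by
    by_contra huA
    exact huv.lt.not_ge (hmin ⟨hau, huA⟩ huv.le)
  exact ⟨u, huA, v, hvA, huv, hau, hvb⟩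

section Transitions

variable {B : ℕ} {A : Set (Finset (Fin B))} {S T : Finset (Fin B)}

theorem adm_iff_ssubset_or_covBy : Adm S T ↔ S ⊂ T ∨ T ⋖ S := by
  simp only [Adm, Finset.covBy_iff_exists_erase, eq_comm]

theorem exists_adm_notMem (hA : A.Nonempty) (hA' : A ≠ Set.univ) :
    ∃ S ∈ A, ∃ T ∉ A, Adm S T := by
  by_cases huniv : Finset.univ ∈ A
  · obtain ⟨T, hT⟩ := (Set.ne_univ_iff_exists_notMem A).1 hA'
    obtain ⟨U, hU, V, hV, hUV, -, -⟩ :=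
      exists_covBy_notMem_of_le (A := Aᶜ) T.subset_univ hT (Set.notMem_compl_iff.2 huniv)
    exact ⟨V, Set.notMem_compl_iff.1 hV, U, hU, adm_iff_ssubset_or_covBy.2 (.inr hUV)⟩
  · obtain ⟨S, hS⟩ := hA
    have hSuniv : S ⊂ Finset.univ :=
      S.subset_univ.ssubset_of_ne (ne_of_mem_of_not_mem hS huniv)
    exact ⟨S, hS, Finset.univ, huniv, .inl hSuniv⟩

end Transitions

section Balance

variable {B : ℕ} {G : Finset (Fin B) → ℝ} {γ : Fin B → ℝ} {S T U V : Finset (Fin B)}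

theorem phi_sub_res_of_ssubset (h : S ⊂ T) :
    phi G γ S - res G γ S T = G S - ∑ b ∈ T, γ b := by
  have hsum : ∑ b ∈ T \ S, γ b + ∑ b ∈ S, γ b = ∑ b ∈ T, γ b := Finset.sum_sdiff h.subset
  rw [phi, res, if_pos h]
  linarith

theorem phi_sub_res_comm_of_ssubset (h : S ⊂ T) :
    phi G γ T - res G γ T S = phi G γ S - res G γ S T := by
  rw [phi_sub_res_of_ssubset h, phi, res, if_neg h.asymm]
  ring

theorem phi_sub_res_le_of_subset (hG : Monotone G) (hγ : ∀ b, 0 ≤ γ b)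
    (hSU : S ⊆ U) (hUV : U ⊂ V) (hVT : V ⊆ T) :
    phi G γ S - res G γ S T ≤ phi G γ U - res G γ U V := by
  have hST : S ⊂ T := (hSU.trans_ssubset hUV).trans_subset hVT
  have hsum : ∑ b ∈ V, γ b ≤ ∑ b ∈ T, γ b :=
    Finset.sum_le_sum_of_subset_of_nonneg hVT fun b _ _ ↦ hγ b
  rw [phi_sub_res_of_ssubset hST, phi_sub_res_of_ssubset hUV]
  exact sub_le_sub (hG hSU) hsum

/-- The values `φ(S) - r(S,T)` over the admissible transitions leaving `A`. One side of the modified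
balance equation across `A` is the supremum of `exitValues G γ A`, the other that of
`exitValues G γ Aᶜ`. -/
def exitValues (G : Finset (Fin B) → ℝ) (γ : Fin B → ℝ) (A : Set (Finset (Fin B))) : Set ℝ :=
  {x | ∃ S ∈ A, ∃ T ∉ A, Adm S T ∧ x = phi G γ S - res G γ S T}

theorem isCofinalFor_exitValues_compl (hG : Monotone G) (hγ : ∀ b, 0 ≤ γ b)
    (A : Set (Finset (Fin B))) : IsCofinalFor (exitValues G γ A) (exitValues G γ Aᶜ) := by
  rintro _ ⟨S, hS, T, hT, hadm, rfl⟩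
  rcases adm_iff_ssubset_or_covBy.1 hadm with hST | hTS
  · obtain ⟨U, hU, V, hV, hUV, hSU, hVT⟩ := exists_covBy_notMem_of_le hST.subset hS hT
    have hVU : Adm V U := adm_iff_ssubset_or_covBy.2 (.inr hUV)
    refine ⟨_, ⟨V, hV, U, Set.notMem_compl_iff.2 hU, hVU, rfl⟩, ?_⟩
    rw [phi_sub_res_comm_of_ssubset hUV.lt]
    exact phi_sub_res_le_of_subset hG hγ hSU hUV.lt hVT
  · exact ⟨_, ⟨T, hT, S, Set.notMem_compl_iff.2 hS, .inl hTS.lt, rfl⟩,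
      (phi_sub_res_comm_of_ssubset hTS.lt).le⟩

theorem sSup_exitValues_compl (hG : Monotone G) (hγ : ∀ b, 0 ≤ γ b)
    (A : Set (Finset (Fin B))) : sSup (exitValues G γ Aᶜ) = sSup (exitValues G γ A) := by
  have hcofinal : IsCofinalFor (exitValues G γ Aᶜ) (exitValues G γ A) := by
    simpa only [compl_compl] using isCofinalFor_exitValues_compl hG hγ Aᶜ
  exact csSup_eq_csSup_of_forall_exists_le hcofinal (isCofinalFor_exitValues_compl hG hγ A)

end Balance

/-- Lemma 5 ("our_balance"): for every nonempty proper set of states A, the crossing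
transitions in both directions exist, and φ satisfies the modified balance equation
across A. -/
theorem stmt0 {B : ℕ} (G : Finset (Fin B) → ℝ) (γ : Fin B → ℝ)
    (hG0 : G ∅ = 0)
    (hGmono : ∀ S T : Finset (Fin B), S ⊆ T → G S ≤ G T)
    (hγ : ∀ b, 0 < γ b)
    (A : Set (Finset (Fin B))) (hA : A.Nonempty) (hA' : A ≠ Set.univ) :
    (∃ S ∈ A, ∃ T ∉ A, Adm S T) ∧
    (∃ T ∉ A, ∃ S ∈ A, Adm T S) ∧
    sSup {x : ℝ | ∃ S ∈ A, ∃ T ∉ A, Adm S T ∧ x = phi G γ S - res G γ S T} =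
      sSup {x : ℝ | ∃ T ∉ A, ∃ S ∈ A, Adm T S ∧ x = phi G γ T - res G γ T S} := by
  have hexit : ∃ S ∈ A, ∃ T ∉ A, Adm S T := exists_adm_notMem hA hA'
  have hentry : ∃ T ∉ A, ∃ S ∈ A, Adm T S := by
    simpa only [Set.mem_compl_iff, not_not] using
      exists_adm_notMem (Set.nonempty_compl.2 hA') (Set.compl_ne_univ.2 hA)
  have hbalance : sSup (exitValues G γ A) = sSup (exitValues G γ Aᶜ) :=
    (sSup_exitValues_compl hGmono (fun b ↦ (hγ b).le) A).symm
  refine ⟨hexit, hentry, ?_⟩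
  simpa only [exitValues, Set.mem_compl_iff, not_not] using hbalance
end

section
/- Let A be any set of states, and let Ŝ ∈ A and Ẑ ∉ A be states with Ŝ ⊊ Ẑ and |Ẑ| ≥ |Ŝ| + 2. Then there exist a state S′ ∈ A and an index b ∉ S′ such that Ŝ ⊆ S′, S′ ∪ {b} ⊆ Ẑ, S′ ∪ {b} ∉ A, and φ(Ŝ) − Σ_{b′ ∈ Ẑ∖Ŝ} γ_{b′} ≤ φ(S′) − γ_b. -/
theorem exists_covBy_mem_notMem {P : Type*} [PartialOrder P] [LocallyFiniteOrder P] {A : Set P}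
    {a z : P} (ha : a ∈ A) (hz : z ∉ A) (haz : a ≤ z) :
    ∃ x ∈ A, ∃ y ∉ A, a ≤ x ∧ x ⋖ y ∧ y ≤ z := by
  obtain ⟨x, hax, hx⟩ := ((Set.finite_Icc a z).inter_of_right A).exists_le_maximal
    ⟨ha, Set.left_mem_Icc.2 haz⟩
  obtain ⟨hxA, -, hxz⟩ := hx.prop
  obtain ⟨y, hxy, hyz⟩ := exists_covBy_le_of_lt (hxz.lt_of_ne (ne_of_mem_of_not_mem hxA hz))
  have hyA : y ∉ A := fun hyA => hx.not_prop_of_gt hxy.lt ⟨hyA, hax.trans hxy.le, hyz⟩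
  exact ⟨x, hxA, y, hyA, hax, hxy, hyz⟩

theorem exists_insert_notMem_of_subset {α : Type*} [DecidableEq α] {A : Set (Finset α)}
    {S Z : Finset α} (hS : S ∈ A) (hZ : Z ∉ A) (hSZ : S ⊆ Z) :
    ∃ S' ∈ A, ∃ b ∉ S', S ⊆ S' ∧ insert b S' ⊆ Z ∧ insert b S' ∉ A := by
  obtain ⟨S', hS', T, hT, hSS', hcov, hTZ⟩ := exists_covBy_mem_notMem hS hZ hSZ
  obtain ⟨b, hb, rfl⟩ := Finset.covBy_iff_exists_insert.1 hcov
  exact ⟨S', hS', b, hb, hSS', hTZ, hT⟩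

section Potential

variable {α M : Type*} [AddCommGroup M]

/-- The potential `φ(S) = G(S) - ∑_{b ∈ S} γ_b` of a finite set of stations, for an arbitrary type
of stations and gains in an arbitrary abelian group; `phi` is the case `α = Fin B`, `M = ℝ`. -/
def potential (G : Finset α → M) (γ : α → M) (S : Finset α) : M :=
  G S - ∑ b ∈ S, γ b

variable [DecidableEq α] {G : Finset α → M} {γ : α → M}

theorem potential_sub_sum_sdiff {S Z : Finset α} (hSZ : S ⊆ Z) :
    potential G γ S - ∑ b ∈ Z \ S, γ b = G S - ∑ b ∈ Z, γ b := by
  rw [potential, sub_sub, add_comm, Finset.sum_sdiff hSZ]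

variable [PartialOrder M] [IsOrderedAddMonoid M]

theorem potential_sub_sum_sdiff_le (hG : Monotone G) (hγ : ∀ b, 0 ≤ γ b) {S S' T Z : Finset α}
    (hSS' : S ⊆ S') (hS'T : S' ⊆ T) (hTZ : T ⊆ Z) :
    potential G γ S - ∑ b ∈ Z \ S, γ b ≤ potential G γ S' - ∑ b ∈ T \ S', γ b := by
  rw [potential_sub_sum_sdiff ((hSS'.trans hS'T).trans hTZ), potential_sub_sum_sdiff hS'T]
  exact sub_le_sub (hG hSS') (Finset.sum_le_sum_of_subset_of_nonneg hTZ fun b _ _ => hγ b)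

theorem stmt2_general (hG : Monotone G) (hγ : ∀ b, 0 ≤ γ b) {A : Set (Finset α)}
    {S Z : Finset α} (hS : S ∈ A) (hZ : Z ∉ A) (hSZ : S ⊆ Z) :
    ∃ S' ∈ A, ∃ b ∉ S', S ⊆ S' ∧ insert b S' ⊆ Z ∧ insert b S' ∉ A ∧
      potential G γ S - ∑ b' ∈ Z \ S, γ b' ≤ potential G γ S' - γ b := by
  obtain ⟨S', hS', b, hb, hSS', hbZ, hbA⟩ := exists_insert_notMem_of_subset hS hZ hSZ
  have hle := potential_sub_sum_sdiff_le hG hγ hSS' (Finset.subset_insert b S') hbZ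
  rw [Finset.insert_sdiff_cancel hb, Finset.sum_singleton] at hle
  exact ⟨S', hS', b, hb, hSS', hbZ, hbA, hle⟩

end Potential

/-- Key inequality of Appendix A: any upward crossing transition from Ŝ ∈ A (`Shat`) to
an ancestor Ẑ ∉ A (`Zhat`) whose weight exceeds |Ŝ| by at least 2 is dominated by a
parent–child crossing transition (S', S' ∪ {b}) between A and its complement. -/
theorem stmt2 {B : ℕ} (G : Finset (Fin B) → ℝ) (γ : Fin B → ℝ)
    (hG0 : G ∅ = 0)
    (hGmono : ∀ S T : Finset (Fin B), S ⊆ T → G S ≤ G T)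
    (hγ : ∀ b, 0 < γ b)
    (A : Set (Finset (Fin B))) (Shat Zhat : Finset (Fin B))
    (hS : Shat ∈ A) (hZ : Zhat ∉ A) (hss : Shat ⊂ Zhat)
    (hcard : Shat.card + 2 ≤ Zhat.card) :
    ∃ S' ∈ A, ∃ b ∉ S', Shat ⊆ S' ∧ insert b S' ⊆ Zhat ∧ insert b S' ∉ A ∧
      phi G γ Shat - ∑ b' ∈ Zhat \ Shat, γ b' ≤ phi G γ S' - γ b := by
  exact stmt2_general (fun S T => hGmono S T) (fun b => (hγ b).le) hS hZ hss.subset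
end

section
/- Let λ > 0 and T > 0, and let (Z_k)_{k≥1} be an i.i.d. sequence of exponential random variables with rate λ on a probability space. Let N := inf{ k ≥ 1 : Z_k ≥ T }. Then N is almost surely finite and E[ T + Σ_{k=1}^{N−1} Z_k ] = (e^{λT} − 1)/λ. -/
open MeasureTheory ProbabilityTheory

/-!
Let `N` be the first index at which an i.i.d. sequence `X` with law `ν` enters a set `s`. The event
`{k ≤ N}` constrains only `X 0, …, X (k - 1)`, so it has probability `(ν sᶜ) ^ k` and is independent
of `X k`. Summing the geometric series gives Wald's identity
`E[∑ k ≤ N, g (X k)] = (ν s)⁻¹ * ∫ g dν`.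

For exponential inter-update times and `s = [T, ∞)`, every term before `N` is below `T` and the term
at `N` is at least `T`. Hence `T + ∑ k < N, Z k = ∑ k ≤ N, min (Z k) T`, and the expectation is
`E[min (Z 0) T] / P(T ≤ Z 0) = ((1 - exp (-λT)) / λ) / exp (-λT)`.
-/

section FirstEntry

variable {Ω 𝓧 E : Type*} {X : ℕ → Ω → 𝓧} {s : Set 𝓧} {ω : Ω}

/-- The event that the process `X` has not visited `s` before time `k`, that is, that the first
entry time into `s` is at least `k` or infinite. -/
def avoidsBefore (X : ℕ → Ω → 𝓧) (s : Set 𝓧) (k : ℕ) : Set Ω :=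
  {ω | ∀ j < k, X j ω ∉ s}

/-- The first time at which the process `X` visits `s`, the stopping time of Wald's identity. Its
value is the junk value `0` on paths that never visit `s`. -/
noncomputable def firstEntry (X : ℕ → Ω → 𝓧) (s : Set 𝓧) (ω : Ω) : ℕ :=
  sInf {k | X k ω ∈ s}

lemma apply_firstEntry_mem (h : ∃ k, X k ω ∈ s) : X (firstEntry X s ω) ω ∈ s :=
  Nat.sInf_mem h

lemma apply_notMem_of_lt_firstEntry {k : ℕ} (hk : k < firstEntry X s ω) : X k ω ∉ s :=
  Nat.notMem_of_lt_sInf hk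

lemma mem_avoidsBefore_iff_le_firstEntry (h : ∃ k, X k ω ∈ s) {k : ℕ} :
    ω ∈ avoidsBefore X s k ↔ k ≤ firstEntry X s ω :=
  ⟨fun hω => le_of_not_gt fun hlt => hω _ hlt (apply_firstEntry_mem h),
    fun hk _ hj => apply_notMem_of_lt_firstEntry (hj.trans_le hk)⟩

lemma tsum_indicator_avoidsBefore [AddCommMonoid E] [TopologicalSpace E]
    (h : ∃ k, X k ω ∈ s) (f : ℕ → Ω → E) :
    ∑' k, (avoidsBefore X s k).indicator (f k) ω =
      ∑ k ∈ Finset.range (firstEntry X s ω + 1), f k ω := by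
  have hmem : ∀ k, ω ∈ avoidsBefore X s k ↔ k ∈ Finset.range (firstEntry X s ω + 1) := fun k => by
    rw [mem_avoidsBefore_iff_le_firstEntry h, Finset.mem_range_succ_iff]
  rw [tsum_eq_sum fun k hk => Set.indicator_of_notMem (mt (hmem k).1 hk) _]
  exact Finset.sum_congr rfl fun k hk => Set.indicator_of_mem ((hmem k).2 hk) _

lemma sum_range_firstEntry_min {Z : ℕ → Ω → ℝ} {T : ℝ} (h : ∃ k, Z k ω ∈ Set.Ici T) :
    ∑ k ∈ Finset.range (firstEntry Z (Set.Ici T) ω + 1), min (Z k ω) T =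
      T + ∑ k ∈ Finset.range (firstEntry Z (Set.Ici T) ω), Z k ω := by
  have hlast : min (Z (firstEntry Z (Set.Ici T) ω) ω) T = T :=
    min_eq_right (Set.mem_Ici.1 (apply_firstEntry_mem h))
  have hbefore : ∀ k ∈ Finset.range (firstEntry Z (Set.Ici T) ω), min (Z k ω) T = Z k ω :=
    fun k hk => min_eq_left
      (not_le.1 (apply_notMem_of_lt_firstEntry (Finset.mem_range.1 hk))).le
  rw [Finset.sum_range_succ, hlast, Finset.sum_congr rfl hbefore, add_comm]

end FirstEntry

section Wald

variable {Ω 𝓧 E : Type*} [MeasurableSpace Ω] [MeasurableSpace 𝓧] {μ : Measure Ω} {ν : Measure 𝓧}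
  {X : ℕ → Ω → 𝓧} {s : Set 𝓧}

lemma nullMeasurableSet_avoidsBefore (hX : ∀ k, AEMeasurable (X k) μ) (hs : MeasurableSet s)
    (k : ℕ) : NullMeasurableSet (avoidsBefore X s k) μ := by
  have h : avoidsBefore X s k = ⋂ j ∈ Finset.range k, X j ⁻¹' sᶜ := by
    ext ω
    simp [avoidsBefore]
  rw [h]
  exact Finset.nullMeasurableSet_biInter _ fun j _ => (hX j).nullMeasurable hs.compl

lemma measure_preimage_inter_avoidsBefore (hindep : iIndepFun X μ) (hX : ∀ k, HasLaw (X k) ν μ)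
    (hs : MeasurableSet s) {t : Set 𝓧} (ht : MeasurableSet t) (k : ℕ) :
    μ (X k ⁻¹' t ∩ avoidsBefore X s k) = ν sᶜ ^ k * ν t := by
  let sets : ℕ → Set 𝓧 := fun j => if j < k then sᶜ else t
  have hsets : ∀ j, MeasurableSet (sets j) := fun j => by
    dsimp only [sets]
    split_ifs
    exacts [hs.compl, ht]
  have hinter : X k ⁻¹' t ∩ avoidsBefore X s k =
      ⋂ j ∈ Finset.range (k + 1), X j ⁻¹' sets j := by
    ext ω
    simp +contextual [avoidsBefore, sets, Finset.range_add_one]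
  have hprod : ∏ j ∈ Finset.range k, ν (sets j) = ν sᶜ ^ k := by
    rw [Finset.prod_eq_pow_card fun j hj => congrArg ν (if_pos (Finset.mem_range.1 hj)),
      Finset.card_range]
  calc μ (X k ⁻¹' t ∩ avoidsBefore X s k)
      = ∏ j ∈ Finset.range (k + 1), μ (X j ⁻¹' sets j) := by
        rw [hinter, hindep.measure_inter_preimage_eq_mul _ fun j _ => hsets j]
    _ = ∏ j ∈ Finset.range (k + 1), ν (sets j) :=
        Finset.prod_congr rfl fun j _ => (hX j).measure_eq (hsets j)
    _ = ν sᶜ ^ k * ν t := by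
        rw [Finset.prod_range_succ, hprod, show sets k = t from if_neg (lt_irrefl k)]

lemma map_restrict_avoidsBefore (hindep : iIndepFun X μ) (hX : ∀ k, HasLaw (X k) ν μ)
    (hs : MeasurableSet s) (k : ℕ) :
    (μ.restrict (avoidsBefore X s k)).map (X k) = ν sᶜ ^ k • ν := by
  ext t ht
  have hnull := nullMeasurableSet_avoidsBefore (fun j => (hX j).aemeasurable) hs k
  rw [Measure.map_apply_of_aemeasurable (hX k).aemeasurable.restrict ht,
    Measure.restrict_apply₀' hnull, measure_preimage_inter_avoidsBefore hindep hX hs ht,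
    Measure.smul_apply, smul_eq_mul]

lemma setIntegral_avoidsBefore [NormedAddCommGroup E] [NormedSpace ℝ E]
    (hindep : iIndepFun X μ) (hX : ∀ k, HasLaw (X k) ν μ) (hs : MeasurableSet s)
    {g : 𝓧 → E} (hg : AEStronglyMeasurable g ν) (k : ℕ) :
    ∫ ω in avoidsBefore X s k, g (X k ω) ∂μ = ν.real sᶜ ^ k • ∫ x, g x ∂ν := by
  have hmap := map_restrict_avoidsBefore hindep hX hs k
  rw [← integral_map (hX k).aemeasurable.restrict (by rw [hmap]; exact hg.smul_measure _), hmap,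
    integral_smul_measure, ENNReal.toReal_pow, measureReal_def]

lemma ae_exists_mem_of_iIndepFun (hindep : iIndepFun X μ) (hX : ∀ k, HasLaw (X k) ν μ)
    (hs : MeasurableSet s) (hνs : ν s ≠ 0) : ∀ᵐ ω ∂μ, ∃ k, X k ω ∈ s := by
  have := hindep.isProbabilityMeasure
  have : IsProbabilityMeasure ν := (hX 0).isProbabilityMeasure_iff.1 inferInstance
  have hle : ∀ n : ℕ, μ {ω | ¬∃ k, X k ω ∈ s} ≤ ν sᶜ ^ n := fun n => by
    have h := measure_preimage_inter_avoidsBefore hindep hX hs MeasurableSet.univ n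
    rw [measure_univ, mul_one] at h
    rw [← h]
    exact measure_mono fun ω hω => ⟨trivial, fun j _ hj => hω ⟨j, hj⟩⟩
  have hlt : ν sᶜ < 1 := by
    rw [prob_compl_eq_one_sub hs]
    exact ENNReal.sub_lt_self ENNReal.one_ne_top one_ne_zero hνs
  exact le_zero_iff.1 (ge_of_tendsto' (ENNReal.tendsto_pow_atTop_nhds_zero_of_lt_one hlt) hle)

lemma hasSum_measureReal_compl_pow [IsProbabilityMeasure ν] (hs : MeasurableSet s)
    (hνs : ν s ≠ 0) : HasSum (fun k : ℕ => ν.real sᶜ ^ k) (ν.real s)⁻¹ := by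
  have hcompl : ν.real sᶜ = 1 - ν.real s := probReal_compl_eq_one_sub hs
  have hlt : ν.real sᶜ < 1 := hcompl ▸ sub_lt_self 1 (ENNReal.toReal_pos hνs (measure_ne_top ν s))
  simpa only [hcompl, sub_sub_cancel] using hasSum_geometric_of_lt_one measureReal_nonneg hlt

theorem integral_sum_range_firstEntry [NormedAddCommGroup E] [NormedSpace ℝ E]
    (hindep : iIndepFun X μ) (hX : ∀ k, HasLaw (X k) ν μ) (hs : MeasurableSet s) (hνs : ν s ≠ 0)
    {g : 𝓧 → E} (hg : Integrable g ν) :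
    ∫ ω, ∑ k ∈ Finset.range (firstEntry X s ω + 1), g (X k ω) ∂μ =
      (ν.real s)⁻¹ • ∫ x, g x ∂ν := by
  have := hindep.isProbabilityMeasure
  have : IsProbabilityMeasure ν := (hX 0).isProbabilityMeasure_iff.1 inferInstance
  let F : ℕ → Ω → E := fun k => (avoidsBefore X s k).indicator fun ω => g (X k ω)
  have hnull := nullMeasurableSet_avoidsBefore (fun j => (hX j).aemeasurable) hs
  have hgeom := hasSum_measureReal_compl_pow hs hνs
  have hF_int : ∀ k, Integrable (F k) μ := fun k =>
    (Integrable.comp_aemeasurable ((hX k).map_eq ▸ hg) (hX k).aemeasurable).indicator₀ (hnull k)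
  have hF_integral : ∀ k, ∫ ω, F k ω ∂μ = ν.real sᶜ ^ k • ∫ x, g x ∂ν := fun k => by
    rw [integral_indicator₀ (hnull k),
      setIntegral_avoidsBefore hindep hX hs hg.aestronglyMeasurable]
  have hF_norm : ∀ k, ∫ ω, ‖F k ω‖ ∂μ = ν.real sᶜ ^ k * ∫ x, ‖g x‖ ∂ν := fun k => by
    simp only [F, norm_indicator_eq_indicator_norm]
    rw [integral_indicator₀ (hnull k),
      setIntegral_avoidsBefore hindep hX hs hg.norm.aestronglyMeasurable, smul_eq_mul]
  have hF_sum : Summable fun k => ∫ ω, ‖F k ω‖ ∂μ := by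
    simp only [hF_norm]
    exact hgeom.summable.mul_right _
  calc ∫ ω, ∑ k ∈ Finset.range (firstEntry X s ω + 1), g (X k ω) ∂μ
      = ∫ ω, ∑' k, F k ω ∂μ := by
        refine integral_congr_ae ?_
        filter_upwards [ae_exists_mem_of_iIndepFun hindep hX hs hνs] with ω hω
        exact (tsum_indicator_avoidsBefore hω fun k ω => g (X k ω)).symm
    _ = ∑' k, ν.real sᶜ ^ k • ∫ x, g x ∂ν := by
        rw [← integral_tsum_of_summable_integral_norm hF_int hF_sum]
        simp only [hF_integral]
    _ = (ν.real s)⁻¹ • ∫ x, g x ∂ν := (hgeom.smul_const _).tsum_eq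

end Wald

section Exponential

variable {r T : ℝ}

lemma eq_expMeasure_of_measure_Ioi {ν : Measure ℝ} [IsProbabilityMeasure ν] (hr : 0 < r)
    (h : ∀ t : ℝ, 0 ≤ t → ν (Set.Ioi t) = ENNReal.ofReal (Real.exp (-(r * t)))) :
    ν = expMeasure r := by
  have := isProbabilityMeasure_expMeasure hr
  have hIic : ∀ t : ℝ, 0 ≤ t → ν.real (Set.Iic t) = 1 - Real.exp (-(r * t)) := fun t ht => by
    rw [← Set.compl_Ioi, probReal_compl_eq_one_sub measurableSet_Ioi, measureReal_def, h t ht,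
      ENNReal.toReal_ofReal (Real.exp_pos _).le]
  refine Measure.eq_of_cdf _ _ (StieltjesFunction.ext fun x => ?_)
  rw [cdf_expMeasure_eq hr, cdf_eq_real]
  split_ifs with hx
  · exact hIic x hx
  · refine le_antisymm ?_ measureReal_nonneg
    calc ν.real (Set.Iic x) ≤ ν.real (Set.Iic 0) :=
          measureReal_mono (Set.Iic_subset_Iic.2 (not_le.1 hx).le)
      _ = 0 := by rw [hIic 0 le_rfl]; simp

lemma hasLaw_expMeasure_of_measure_lt {Ω : Type*} [MeasurableSpace Ω] {μ : Measure Ω}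
    [IsProbabilityMeasure μ] {Z : Ω → ℝ} (hZ : AEMeasurable Z μ) (hr : 0 < r)
    (h : ∀ t : ℝ, 0 ≤ t → μ {ω | t < Z ω} = ENNReal.ofReal (Real.exp (-(r * t)))) :
    HasLaw Z (expMeasure r) μ where
  aemeasurable := hZ
  map_eq := by
    have := Measure.isProbabilityMeasure_map hZ
    refine eq_expMeasure_of_measure_Ioi hr fun t ht => ?_
    rw [Measure.map_apply_of_aemeasurable hZ measurableSet_Ioi]
    exact h t ht

lemma measureReal_expMeasure_Ici (hr : 0 < r) (hT : 0 ≤ T) :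
    (expMeasure r).real (Set.Ici T) = Real.exp (-(r * T)) := by
  have := isProbabilityMeasure_expMeasure hr
  have hatom : expMeasure r {T} = 0 := withDensity_absolutelyContinuous _ _ (measure_singleton T)
  rw [← Set.compl_Iio, probReal_compl_eq_one_sub measurableSet_Iio,
    measureReal_congr (Iio_ae_eq_Iic' hatom), ← cdf_eq_real, cdf_expMeasure_eq hr, if_pos hT,
    sub_sub_cancel]

lemma ae_nonneg_expMeasure (hr : 0 < r) : ∀ᵐ x ∂expMeasure r, 0 ≤ x := by
  have := isProbabilityMeasure_expMeasure hr
  have h := measureReal_expMeasure_Ici hr le_rfl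
  rw [mul_zero, neg_zero, Real.exp_zero] at h
  exact (prob_compl_eq_zero_iff measurableSet_Ici).2 ((ENNReal.toReal_eq_one_iff _).1 h)

lemma integrable_min_const_expMeasure (hr : 0 < r) (T : ℝ) :
    Integrable (fun x => min x T) (expMeasure r) := by
  have := isProbabilityMeasure_expMeasure hr
  refine Integrable.of_bound (by fun_prop) |T| ?_
  filter_upwards [ae_nonneg_expMeasure hr] with x hx
  have hlower : -|T| ≤ min x T :=
    le_min ((neg_nonpos.2 (abs_nonneg T)).trans hx) (neg_abs_le T)
  exact abs_le.2 ⟨hlower, (min_le_right x T).trans (le_abs_self T)⟩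

lemma integral_exp_neg_mul (hr : r ≠ 0) (T : ℝ) :
    ∫ t in 0..T, Real.exp (-(r * t)) = (1 - Real.exp (-(r * T))) / r := by
  simp only [← neg_mul]
  rw [intervalIntegral.integral_comp_mul_left Real.exp (neg_ne_zero.2 hr), integral_exp,
    mul_zero, Real.exp_zero, smul_eq_mul]
  field_simp
  ring

lemma integral_min_const_expMeasure (hr : 0 < r) (hT : 0 ≤ T) :
    ∫ x, min x T ∂expMeasure r = (1 - Real.exp (-(r * T))) / r := by
  have hnonneg : 0 ≤ᵐ[expMeasure r] fun x => min x T := by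
    filter_upwards [ae_nonneg_expMeasure hr] with x hx using le_min hx hT
  have htail : ∀ t ∈ Set.Ioc 0 T,
      (expMeasure r).real {x | t ≤ min x T} = Real.exp (-(r * t)) := fun t ht => by
    rw [← measureReal_expMeasure_Ici hr ht.1.le]
    congr 1
    ext x
    simp [ht.2]
  rw [(integrable_min_const_expMeasure hr T).integral_eq_integral_Ioc_meas_le hnonneg
      (Filter.Eventually.of_forall fun x => min_le_right x T),
    setIntegral_congr_fun measurableSet_Ioc htail, ← intervalIntegral.integral_of_le hT,
    integral_exp_neg_mul hr.ne']

end Exponential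

/-- Expected sojourn time computation of Section IV-A (equation (9)) via Wald's
identity. Here `Z k` stands for the inter-update time Z_{k+1} (0-based indexing), so
that `N ω = sInf {k | T ≤ Z k ω}` is the (1-based) stopping index minus one, the sum
`∑ k ∈ Finset.range (N ω), Z k ω` is Σ_{k=1}^{N-1} Z_k, and the exponential
distribution of rate λ is characterized by its survival function. -/
theorem stmt5 {Ω : Type*} [MeasurableSpace Ω] (μ : Measure Ω) [IsProbabilityMeasure μ]
    (lam T : ℝ) (hlam : 0 < lam) (hT : 0 < T)
    (Z : ℕ → Ω → ℝ) (hmeas : ∀ k, Measurable (Z k))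
    (hindep : iIndepFun Z μ)
    (hexp : ∀ k, ∀ t : ℝ, 0 ≤ t →
      μ {ω | t < Z k ω} = ENNReal.ofReal (Real.exp (-(lam * t))))
    (N : Ω → ℕ) (hN : ∀ ω, N ω = sInf {k | T ≤ Z k ω}) :
    (∀ᵐ ω ∂μ, ∃ k, T ≤ Z k ω) ∧
    ∫ ω, (T + ∑ k ∈ Finset.range (N ω), Z k ω) ∂μ =
      (Real.exp (lam * T) - 1) / lam := by
  have hlaw : ∀ k, HasLaw (Z k) (expMeasure lam) μ := fun k =>
    hasLaw_expMeasure_of_measure_lt (hmeas k).aemeasurable hlam (hexp k)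
  have htail := measureReal_expMeasure_Ici hlam hT.le
  have htail_ne : expMeasure lam (Set.Ici T) ≠ 0 := fun h =>
    (Real.exp_pos _).ne' (htail.symm.trans (by rw [measureReal_def, h, ENNReal.toReal_zero]))
  have hhit : ∀ᵐ ω ∂μ, ∃ k, T ≤ Z k ω :=
    ae_exists_mem_of_iIndepFun hindep hlaw measurableSet_Ici htail_ne
  obtain rfl : N = firstEntry Z (Set.Ici T) := funext hN
  refine ⟨hhit, ?_⟩
  calc ∫ ω, (T + ∑ k ∈ Finset.range (firstEntry Z (Set.Ici T) ω), Z k ω) ∂μ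
      = ∫ ω, ∑ k ∈ Finset.range (firstEntry Z (Set.Ici T) ω + 1), min (Z k ω) T ∂μ := by
        refine integral_congr_ae ?_
        filter_upwards [hhit] with ω hω using (sum_range_firstEntry_min hω).symm
    _ = (Real.exp (-(lam * T)))⁻¹ * ((1 - Real.exp (-(lam * T))) / lam) := by
        rw [integral_sum_range_firstEntry hindep hlaw measurableSet_Ici htail_ne
            (integrable_min_const_expMeasure hlam T),
          htail, integral_min_const_expMeasure hlam hT.le, smul_eq_mul]
    _ = (Real.exp (lam * T) - 1) / lam := by
        rw [Real.exp_neg]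
        field_simp
end

section
/- Let β > 0 and Δ > 0, and let T : (0,1) → ℝ be a function such that lim_{q→0⁺} βT(q)/log(1/q) = 1. Define ρ(q) := βΔ / (e^{βΔ·T(q)} − 1). Then lim_{q→0⁺} log ρ(q) / log q = Δ. -/
open Filter Topology

/-! As `x → ∞`, `log (b / (exp x - 1)) = log b - x + o(1)`, so the logarithm of the rate is `-x` to
leading order. For `x = β Δ T(q)` the scaling of `T` gives `x ∼ Δ log (1 / q) = -Δ log q`. -/

theorem tendsto_log_exp_sub_const_sub_self (a : ℝ) :
    Tendsto (fun x => Real.log (Real.exp x - a) - x) atTop (𝓝 0) := by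
  have ratio_tendsto : Tendsto (fun x => 1 - a * Real.exp (-x)) atTop (𝓝 1) := by
    simpa using (Real.tendsto_exp_neg_atTop_nhds_zero.const_mul a).const_sub 1
  have log_ratio_tendsto : Tendsto (fun x => Real.log (1 - a * Real.exp (-x))) atTop (𝓝 0) := by
    simpa using ratio_tendsto.log one_ne_zero
  refine log_ratio_tendsto.congr' ?_
  filter_upwards [ratio_tendsto.eventually_ne one_ne_zero] with x hx
  have factor : Real.exp x - a = Real.exp x * (1 - a * Real.exp (-x)) := by
    rw [Real.exp_neg]
    field_simp
  rw [factor, Real.log_mul (Real.exp_ne_zero x) hx, Real.log_exp, add_sub_cancel_left]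

theorem tendsto_log_div_exp_sub_const_div_self (a : ℝ) {b : ℝ} (hb : b ≠ 0) :
    Tendsto (fun x => Real.log (b / (Real.exp x - a)) / x) atTop (𝓝 (-1)) := by
  have remainder_tendsto :
      Tendsto (fun x => (Real.log b - (Real.log (Real.exp x - a) - x)) / x) atTop (𝓝 0) :=
    ((tendsto_log_exp_sub_const_sub_self a).const_sub (Real.log b)).div_atTop tendsto_id
  have expansion_tendsto := remainder_tendsto.sub_const 1
  rw [zero_sub] at expansion_tendsto
  refine expansion_tendsto.congr' ?_
  filter_upwards [eventually_ne_atTop 0, Real.tendsto_exp_atTop.eventually_gt_atTop a] with x hx ha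
  rw [Real.log_div hb (sub_pos.mpr ha).ne']
  field_simp
  ring

theorem tendsto_log_div_exp_sub_const_div {α : Type*} {l : Filter α} {x L : α → ℝ} {b c : ℝ}
    (a : ℝ) (hb : b ≠ 0) (hc : 0 < c) (hL : Tendsto L l atTop)
    (hx : Tendsto (fun i => x i / L i) l (𝓝 c)) :
    Tendsto (fun i => Real.log (b / (Real.exp (x i) - a)) / L i) l (𝓝 (-c)) := by
  have x_tendsto : Tendsto x l atTop := by
    refine (hx.pos_mul_atTop hc hL).congr' ?_
    filter_upwards [hL.eventually_ne_atTop 0] with i hi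
    exact div_mul_cancel₀ (x i) hi
  have product_tendsto := ((tendsto_log_div_exp_sub_const_div_self a hb).comp x_tendsto).mul hx
  rw [neg_one_mul] at product_tendsto
  refine product_tendsto.congr' ?_
  filter_upwards [x_tendsto.eventually_ne_atTop 0] with i hi
  exact div_mul_div_cancel₀ hi

/-- Logarithmic asymptotics of the downward transition rate (Lemma 1 of the paper):
if the characteristic time T(q) (defined for q ∈ (0,1)) satisfies
βT(q)/log(1/q) → 1 as q → 0⁺, then for ρ(q) = βΔ/(e^{βΔT(q)} − 1) we have
log ρ(q)/log q → Δ. -/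
theorem stmt7 (β Δ : ℝ) (hβ : 0 < β) (hΔ : 0 < Δ) (T : ℝ → ℝ)
    (hT : Tendsto (fun q => β * T q / Real.log (1 / q))
      (𝓝[Set.Ioo (0 : ℝ) 1] 0) (𝓝 1)) :
    Tendsto (fun q => Real.log (β * Δ / (Real.exp (β * Δ * T q) - 1)) / Real.log q)
      (𝓝[Set.Ioo (0 : ℝ) 1] 0) (𝓝 Δ) := by
  have log_tendsto : Tendsto Real.log (𝓝[Set.Ioo (0 : ℝ) 1] 0) atBot :=
    Real.tendsto_log_nhdsGT_zero.mono_left (nhdsWithin_mono 0 Set.Ioo_subset_Ioi_self)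
  have neg_log_tendsto : Tendsto (fun q => -Real.log q) (𝓝[Set.Ioo (0 : ℝ) 1] 0) atTop :=
    tendsto_neg_atBot_atTop.comp log_tendsto
  have exponent_tendsto : Tendsto (fun q => β * Δ * T q / -Real.log q)
      (𝓝[Set.Ioo (0 : ℝ) 1] 0) (𝓝 Δ) := by
    simpa only [one_div, Real.log_inv, mul_one, ← mul_div_assoc, mul_left_comm Δ β, ← mul_assoc β Δ]
      using hT.const_mul Δ
  simpa only [div_neg, neg_neg] using
    (tendsto_log_div_exp_sub_const_div 1 (mul_pos hβ hΔ).ne' hΔ neg_log_tendsto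
      exponent_tendsto).neg
end

section
/- For every state X, the set of admissible in-trees rooted at X is nonempty, and the minimum in-tree resistance ρ(X) satisfies: a state X minimizes ρ over all states if and only if X maximizes φ over all states. That is, { X : ρ(X) ≤ ρ(Y) for all states Y } = { X : φ(X) ≥ φ(Y) for all states Y }. -/
/-- An admissible in-tree rooted at X: every state S ≠ X is mapped to a state t(S) with
(S, t(S)) an admissible transition, and some finite iterate of t sends S to X. -/
def IsInTree {B : ℕ} (X : Finset (Fin B))
    (t : Finset (Fin B) → Finset (Fin B)) : Prop :=
  ∀ S : Finset (Fin B), S ≠ X → Adm S (t S) ∧ ∃ n : ℕ, t^[n] S = X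

/-- The resistance of an in-tree rooted at X: Σ_{S ≠ X} r(S, t(S)). -/
noncomputable def treeRes {B : ℕ} (G : Finset (Fin B) → ℝ) (γ : Fin B → ℝ)
    (X : Finset (Fin B)) (t : Finset (Fin B) → Finset (Fin B)) : ℝ :=
  ∑ S ∈ Finset.univ.filter (· ≠ X), res G γ S (t S)

/-- ρ(X): the minimum resistance over all admissible in-trees rooted at X. -/
noncomputable def minRes {B : ℕ} (G : Finset (Fin B) → ℝ) (γ : Fin B → ℝ)
    (X : Finset (Fin B)) : ℝ :=
  sInf {w : ℝ | ∃ t, IsInTree X t ∧ w = treeRes G γ X t}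

/-
Along a path in an in-tree from `Y` to the root `X`, every transition can be undone: `S ⟶ T` is
reversed by a single upward transition or by a chain of downward ones, at total cost
`r(S, T) + φ(T) - φ(S)`. Replacing the path by its reversal makes every state lead to `Y`, and the
potential differences telescope, so an in-tree rooted at `X` of resistance `w` yields one rooted at
`Y` of resistance at most `w + φ(X) - φ(Y)`. By symmetry `ρ + φ` is constant, and minimizing `ρ`
amounts to maximizing `φ`.
-/

open Finset Relation

section Iterate

variable {V : Type*} {t : V → V} {x y : V} {n : ℕ}

theorem exists_iterate_eq_of_rank_lt (d : V → ℕ) (hd : ∀ a ≠ x, d (t a) < d a) (a : V) :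
    ∃ n, t^[n] a = x := by
  induction a using (measure d).wf.induction with
  | h a ih =>
    by_cases hax : a = x
    · exact ⟨0, hax⟩
    · obtain ⟨n, hn⟩ := ih (t a) (hd a hax)
      exact ⟨n + 1, hn⟩

theorem injOn_iterate_of_forall_ne (hn : t^[n] y = x) (hlt : ∀ m < n, t^[m] y ≠ x) :
    Set.InjOn (t^[·] y) (Set.Iio n) := by
  have ne_of_lt {i j : ℕ} (hij : i < j) (hjn : j < n) : t^[i] y ≠ t^[j] y := fun h ↦ by
    refine hlt (n - j + i) (by omega) ?_
    rw [Function.iterate_add_apply, h, ← Function.iterate_add_apply, Nat.sub_add_cancel hjn.le, hn]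
  intro i hi j hj h
  rcases lt_trichotomy i j with hij | hij | hij
  · exact absurd h (ne_of_lt hij hj)
  · exact hij
  · exact absurd h.symm (ne_of_lt hij hi)

theorem sum_image_iterate_sub [DecidableEq V] {M : Type*} [AddCommGroup M]
    (hinj : Set.InjOn (t^[·] y) (Set.Iio n)) (φ : V → M) :
    ∑ a ∈ (range n).image (t^[·] y), (φ (t a) - φ a) = φ (t^[n] y) - φ y := by
  rw [sum_image (by simpa only [coe_range] using hinj)]
  simpa only [Function.iterate_succ_apply', Function.iterate_zero_apply] using
    sum_range_sub (fun i ↦ φ (t^[i] y)) n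

end Iterate

section InTree

variable {V : Type*} {A : V → V → Prop} {t : V → V} {x y : V}

/-- `t` is the parent map of an in-tree rooted at `x` in the digraph on `V` with edge relation `A`:
the notion `IsInTree`, for an arbitrary digraph. The value `t x` is irrelevant. -/
def IsInTreeOf (A : V → V → Prop) (x : V) (t : V → V) : Prop :=
  ∀ a, a ≠ x → A a (t a) ∧ ∃ n : ℕ, t^[n] a = x

theorem IsInTreeOf.exists_iterate_eq (ht : IsInTreeOf A x t) (a : V) : ∃ n, t^[n] a = x := by
  by_cases hax : a = x
  · exact ⟨0, hax⟩
  · exact (ht a hax).2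

theorem exists_iterate_comp_of_reflTransGen {a : V} (h : ReflTransGen A a x) :
    ∃ n, (Comp A)^[n] Eq a x := by
  induction h using ReflTransGen.head_induction_on with
  | refl => exact ⟨0, rfl⟩
  | head hab _ ih =>
    obtain ⟨n, hn⟩ := ih
    exact ⟨n + 1, by rw [Function.iterate_succ_apply']; exact ⟨_, hab, hn⟩⟩

-- Each vertex is sent one step closer to `x` in the graph distance.
theorem exists_isInTreeOf (h : ∀ a, ReflTransGen A a x) : ∃ t, IsInTreeOf A x t := by
  classical
  have hlen (a : V) := exists_iterate_comp_of_reflTransGen (h a)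
  have exists_closer (a : V) :
      ∃ b, a ≠ x → A a b ∧ Nat.find (hlen b) < Nat.find (hlen a) := by
    have hspec := Nat.find_spec (hlen a)
    rcases hdist : Nat.find (hlen a) with _ | n
    · rw [hdist] at hspec
      exact ⟨a, fun hax ↦ absurd hspec hax⟩
    · rw [hdist, Function.iterate_succ_apply'] at hspec
      obtain ⟨b, hab, hbx⟩ := hspec
      exact ⟨b, fun _ ↦ ⟨hab, Nat.lt_succ_of_le (Nat.find_min' _ hbx)⟩⟩
  choose t ht using exists_closer
  exact ⟨t, fun a hax ↦ ⟨(ht a hax).1, exists_iterate_eq_of_rank_lt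
    (fun b ↦ Nat.find (hlen b)) (fun b hb ↦ (ht b hb).2) a⟩⟩

theorem reflTransGen_of_reversed_orbit [DecidableEq V] {R : V → V → Prop} {n : ℕ}
    (ht : ∀ a, ∃ m, t^[m] a = x) (hn : t^[n] y = x)
    (hrev : ∀ a ∈ (range n).image (t^[·] y), R (t a) a)
    (hoff : ∀ a ≠ x, a ∉ (range n).image (t^[·] y) → R a (t a)) (a : V) :
    ReflTransGen R a y := by
  have orbit_leads (i : ℕ) (hi : i ≤ n) : ReflTransGen R (t^[i] y) y := by
    induction i with
    | zero => exact .refl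
    | succ i ih =>
      rw [Function.iterate_succ_apply']
      exact .head (hrev _ (mem_image_of_mem _ (mem_range.2 hi))) (ih (Nat.le_of_succ_le hi))
  have root_leads : ReflTransGen R x y := hn ▸ orbit_leads n le_rfl
  obtain ⟨m, hm⟩ := ht a
  induction m generalizing a with
  | zero =>
    obtain rfl : a = x := hm
    exact root_leads
  | succ m ih =>
    by_cases hax : a = x
    · exact hax ▸ root_leads
    by_cases ha : a ∈ (range n).image (t^[·] y)
    · obtain ⟨i, hi, rfl⟩ := mem_image.1 ha
      exact orbit_leads i (mem_range.1 hi).le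
    · exact .head (hoff a hax ha) (ih (t a) hm)

end InTree

section Cost

variable {V M : Type*} [AddCommMonoid M] [PartialOrder M]
  {A : V → V → Prop} {r : V → V → M} {a b d : V} {c c' : M}

/-- `b` can be reached from `a` along edges of `A` of total weight at most `c`. The route is encoded
by a finite set of edges that need not form a single path; each edge is paid for only once. -/
def ReachableWithin (A : V → V → Prop) (r : V → V → M) (a b : V) (c : M) : Prop :=
  ∃ E : Finset (V × V), (∀ e ∈ E, A e.1 e.2) ∧
    ReflTransGen (fun u v ↦ (u, v) ∈ E) a b ∧ ∑ e ∈ E, r e.1 e.2 ≤ c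

theorem ReachableWithin.refl (a : V) : ReachableWithin A r a a 0 :=
  ⟨∅, by simp, .refl, by simp⟩

theorem ReachableWithin.single (h : A a b) : ReachableWithin A r a b (r a b) :=
  ⟨{(a, b)}, by simpa using h, .single (mem_singleton_self _), by simp⟩

theorem sum_biUnion_le_of_nonneg [IsOrderedAddMonoid M] {ι α : Type*} [DecidableEq α]
    {s : Finset ι} {F : ι → Finset α} {f : α → M} (hf : ∀ a ∈ s.biUnion F, 0 ≤ f a) :
    ∑ a ∈ s.biUnion F, f a ≤ ∑ i ∈ s, ∑ a ∈ F i, f a := by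
  have image_sigma : (s.sigma F).image Sigma.snd = s.biUnion F := by
    ext a
    simp
  rw [← image_sigma] at hf ⊢
  exact (sum_image_le_of_nonneg hf).trans_eq (sum_sigma _ _ _)

theorem exists_edges_of_reachableWithin [IsOrderedAddMonoid M] (hr : ∀ a b, A a b → 0 ≤ r a b)
    {ι : Type*} {s : Finset ι} {u v : ι → V} {c : ι → M}
    (h : ∀ i ∈ s, ReachableWithin A r (u i) (v i) (c i)) :
    ∃ E : Finset (V × V), (∀ e ∈ E, A e.1 e.2) ∧
      (∀ i ∈ s, ReflTransGen (fun p q ↦ (p, q) ∈ E) (u i) (v i)) ∧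
      ∑ e ∈ E, r e.1 e.2 ≤ ∑ i ∈ s, c i := by
  classical
  choose! F hA hF hle using h
  have hE (e) (he : e ∈ s.biUnion F) : A e.1 e.2 := by
    obtain ⟨i, hi, hei⟩ := mem_biUnion.1 he
    exact hA i hi e hei
  refine ⟨s.biUnion F, hE, fun i hi ↦ ?_, ?_⟩
  · exact ReflTransGen.mono (fun _ _ he ↦ subset_biUnion_of_mem F hi he) _ _ (hF i hi)
  · exact (sum_biUnion_le_of_nonneg fun e he ↦ hr _ _ (hE e he)).trans (sum_le_sum hle)

theorem ReachableWithin.trans [IsOrderedAddMonoid M] (hr : ∀ a b, A a b → 0 ≤ r a b)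
    (hab : ReachableWithin A r a b c) (hbd : ReachableWithin A r b d c') :
    ReachableWithin A r a d (c + c') := by
  obtain ⟨E, hA, hE, hle⟩ := exists_edges_of_reachableWithin hr (s := univ)
    (u := ![a, b]) (v := ![b, d]) (c := ![c, c']) (by simp [Fin.forall_fin_two, hab, hbd])
  exact ⟨E, hA, (hE 0 (mem_univ _)).trans (hE 1 (mem_univ _)), by simpa using hle⟩

end Cost

section Reroot

variable {V M : Type*} [Fintype V] [DecidableEq V] [AddCommGroup M] [PartialOrder M]
  [IsOrderedAddMonoid M] {A : V → V → Prop} {r : V → V → M} {t : V → V} {x : V}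

theorem exists_isInTreeOf_sum_le {y : V} (hr : ∀ a b, A a b → 0 ≤ r a b) {E : Finset (V × V)}
    (hE : ∀ e ∈ E, A e.1 e.2) (hy : ∀ a, ReflTransGen (fun u v ↦ (u, v) ∈ E) a y) :
    ∃ t, IsInTreeOf A y t ∧ ∑ a with a ≠ y, r a (t a) ≤ ∑ e ∈ E, r e.1 e.2 := by
  obtain ⟨t, ht⟩ := exists_isInTreeOf hy
  refine ⟨t, fun a hay ↦ ⟨hE _ (ht a hay).1, (ht a hay).2⟩, ?_⟩
  have graph_injective : Function.Injective fun a ↦ (a, t a) := fun _ _ h ↦ congrArg Prod.fst h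
  have graph_subset : ({a | a ≠ y} : Finset V).image (fun a ↦ (a, t a)) ⊆ E :=
    image_subset_iff.2 fun a ha ↦ (ht a (mem_filter.1 ha).2).1
  calc ∑ a with a ≠ y, r a (t a)
      = ∑ e ∈ ({a | a ≠ y} : Finset V).image (fun a ↦ (a, t a)), r e.1 e.2 :=
        (sum_image (f := fun e ↦ r e.1 e.2) graph_injective.injOn).symm
    _ ≤ ∑ e ∈ E, r e.1 e.2 :=
        sum_le_sum_of_subset_of_nonneg graph_subset fun e he _ ↦ hr _ _ (hE e he)

theorem IsInTreeOf.exists_reroot (hr : ∀ a b, A a b → 0 ≤ r a b) {φ : V → M}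
    (hrev : ∀ a b, A a b → ReachableWithin A r b a (r a b + (φ b - φ a)))
    (ht : IsInTreeOf A x t) (y : V) :
    ∃ t', IsInTreeOf A y t' ∧
      ∑ a with a ≠ y, r a (t' a) ≤ ∑ a with a ≠ x, r a (t a) + (φ x - φ y) := by
  have hyx := ht.exists_iterate_eq y
  set n := Nat.find hyx
  have hn : t^[n] y = x := Nat.find_spec hyx
  have hlt (i : ℕ) (hi : i < n) : t^[i] y ≠ x := Nat.find_min hyx hi
  set P : Finset V := (range n).image (t^[·] y)
  have P_subset : P ⊆ ({a | a ≠ x} : Finset V) :=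
    image_subset_iff.2 fun i hi ↦ by simpa using hlt i (mem_range.1 hi)
  obtain ⟨E, hEA, hE, hle⟩ := exists_edges_of_reachableWithin hr (s := {a | a ≠ x})
    (u := fun a ↦ if a ∈ P then t a else a) (v := fun a ↦ if a ∈ P then a else t a)
    (c := fun a ↦ r a (t a) + if a ∈ P then φ (t a) - φ a else 0) (fun a ha ↦ by
      have hat : A a (t a) := (ht a (mem_filter.1 ha).2).1
      split_ifs
      · exact hrev a (t a) hat
      · simpa only [add_zero] using .single hat)
  have leads_to_y (a : V) : ReflTransGen (fun u v ↦ (u, v) ∈ E) a y := by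
    rw [← reflTransGen_eq_self (r := ReflTransGen _)]
    refine reflTransGen_of_reversed_orbit ht.exists_iterate_eq hn (fun b (hb : b ∈ P) ↦ ?_)
      (fun b hbx (hb : b ∉ P) ↦ ?_) a
    · simpa only [if_pos hb] using hE b (P_subset hb)
    · simpa only [if_neg hb] using hE b (by simpa using hbx)
  obtain ⟨t', ht', hle'⟩ := exists_isInTreeOf_sum_le hr hEA leads_to_y
  refine ⟨t', ht', hle'.trans (hle.trans_eq ?_)⟩
  rw [sum_add_distrib, sum_ite_mem, inter_eq_right.2 P_subset,
    sum_image_iterate_sub (injOn_iterate_of_forall_ne hn hlt), hn]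

end Reroot

section States

variable {B : ℕ} {G : Finset (Fin B) → ℝ} {γ : Fin B → ℝ} {S T X Y : Finset (Fin B)}
  {t : Finset (Fin B) → Finset (Fin B)}

theorem adm_erase {b : Fin B} (hb : b ∈ S) : Adm S (S.erase b) :=
  Or.inr ⟨b, hb, rfl⟩

theorem reflTransGen_adm (S T : Finset (Fin B)) : ReflTransGen Adm S T := by
  have empty_leads : ReflTransGen Adm ∅ T := by
    rcases T.eq_empty_or_nonempty with rfl | hT
    · exact .refl
    · exact .single (Or.inl (empty_ssubset.2 hT))
  induction S using Finset.induction_on with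
  | empty => exact empty_leads
  | insert b S hb ih =>
    have remove_b : Adm (insert b S) S := by
      simpa only [erase_insert hb] using adm_erase (mem_insert_self b S)
    exact .head remove_b ih

theorem exists_isInTree (X : Finset (Fin B)) : ∃ t, IsInTree X t :=
  exists_isInTreeOf fun S ↦ reflTransGen_adm S X

theorem res_of_ssubset (h : S ⊂ T) : res G γ S T = ∑ b ∈ T \ S, γ b :=
  if_pos h

theorem res_of_subset (h : T ⊆ S) : res G γ S T = G S - G T :=
  if_neg (not_ssubset_of_subset h)

theorem res_nonneg (hG : Monotone G) (hγ : ∀ b, 0 ≤ γ b) (h : Adm S T) : 0 ≤ res G γ S T := by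
  rcases h with hST | ⟨b, -, rfl⟩
  · rw [res_of_ssubset hST]
    exact sum_nonneg fun b _ ↦ hγ b
  · rw [res_of_subset (erase_subset b S)]
    exact sub_nonneg.2 (hG (erase_subset b S))

theorem phi_sub_phi_of_subset (h : S ⊆ T) :
    phi G γ T - phi G γ S = G T - G S - ∑ b ∈ T \ S, γ b := by
  rw [phi, phi, ← sum_sdiff h]
  ring

theorem reachableWithin_of_subset (hG : Monotone G) (hγ : ∀ b, 0 ≤ γ b) (h : S ⊆ T) :
    ReachableWithin Adm (res G γ) T S (G T - G S) := by
  induction T using Finset.strongInduction with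
  | H T ih =>
    rcases h.eq_or_ssubset with rfl | hST
    · simpa only [sub_self] using .refl S
    · obtain ⟨b, hbT, hbS⟩ := exists_of_ssubset hST
      have erased : ReachableWithin Adm (res G γ) (T.erase b) S (G (T.erase b) - G S) :=
        ih _ (erase_ssubset hbT) (subset_erase.2 ⟨h, hbS⟩)
      have := (ReachableWithin.single (adm_erase hbT)).trans
        (fun _ _ ↦ res_nonneg hG hγ) erased
      rwa [res_of_subset (erase_subset b T), sub_add_sub_cancel] at this

theorem reachableWithin_reverse (hG : Monotone G) (hγ : ∀ b, 0 ≤ γ b) (h : Adm S T) :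
    ReachableWithin Adm (res G γ) T S (res G γ S T + (phi G γ T - phi G γ S)) := by
  rcases h with hST | ⟨b, hb, rfl⟩
  · rw [res_of_ssubset hST, phi_sub_phi_of_subset hST.subset, add_sub_cancel]
    exact reachableWithin_of_subset hG hγ hST.subset
  · have hlt := erase_ssubset hb
    have cost_eq : res G γ S (S.erase b) + (phi G γ (S.erase b) - phi G γ S)
        = res G γ (S.erase b) S := by
      rw [res_of_subset hlt.subset, res_of_ssubset hlt]
      linarith [phi_sub_phi_of_subset (G := G) (γ := γ) hlt.subset]
    rw [cost_eq]
    exact .single (Or.inl hlt)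

theorem treeRes_nonneg (hG : Monotone G) (hγ : ∀ b, 0 ≤ γ b) (ht : IsInTree X t) :
    0 ≤ treeRes G γ X t :=
  sum_nonneg fun S hS ↦ res_nonneg hG hγ (ht S (mem_filter.1 hS).2).1

theorem minRes_le_treeRes (hG : Monotone G) (hγ : ∀ b, 0 ≤ γ b) (ht : IsInTree X t) :
    minRes G γ X ≤ treeRes G γ X t :=
  csInf_le ⟨0, by rintro _ ⟨s, hs, rfl⟩; exact treeRes_nonneg hG hγ hs⟩ ⟨t, ht, rfl⟩

theorem minRes_add_phi_le (hG : Monotone G) (hγ : ∀ b, 0 ≤ γ b) (X Y : Finset (Fin B)) :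
    minRes G γ Y + phi G γ Y ≤ minRes G γ X + phi G γ X := by
  suffices minRes G γ Y + phi G γ Y - phi G γ X ≤ minRes G γ X by linarith
  obtain ⟨t₀, ht₀⟩ := exists_isInTree X
  refine le_csInf ⟨_, t₀, ht₀, rfl⟩ ?_
  rintro _ ⟨t, ht, rfl⟩
  obtain ⟨t', ht', hle⟩ := IsInTreeOf.exists_reroot (fun _ _ ↦ res_nonneg hG hγ)
    (fun _ _ ↦ reachableWithin_reverse hG hγ) ht Y
  calc minRes G γ Y + phi G γ Y - phi G γ X
      ≤ treeRes G γ Y t' + phi G γ Y - phi G γ X := by gcongr; exact minRes_le_treeRes hG hγ ht'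
    _ ≤ treeRes G γ X t + (phi G γ X - phi G γ Y) + phi G γ Y - phi G γ X := by gcongr; exact hle
    _ = treeRes G γ X t := by ring

theorem minRes_le_minRes_iff (hG : Monotone G) (hγ : ∀ b, 0 ≤ γ b) (X Y : Finset (Fin B)) :
    minRes G γ X ≤ minRes G γ Y ↔ phi G γ Y ≤ phi G γ X := by
  have hconst : minRes G γ X + phi G γ X = minRes G γ Y + phi G γ Y :=
    (minRes_add_phi_le hG hγ Y X).antisymm (minRes_add_phi_le hG hγ X Y)
  constructor <;> intro h <;> linarith

end States

/-- Corollary 1 (deterministic content): in-trees exist at every root, and the states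
of minimal in-tree resistance ρ are exactly the global maximizers of φ. -/
theorem stmt10 {B : ℕ} (G : Finset (Fin B) → ℝ) (γ : Fin B → ℝ)
    (hG0 : G ∅ = 0)
    (hGmono : ∀ S T : Finset (Fin B), S ⊆ T → G S ≤ G T)
    (hγ : ∀ b, 0 < γ b) :
    (∀ X : Finset (Fin B), ∃ t, IsInTree X t) ∧
    {X : Finset (Fin B) | ∀ Y, minRes G γ X ≤ minRes G γ Y} =
      {X : Finset (Fin B) | ∀ Y, phi G γ Y ≤ phi G γ X} := by
  have hmono : Monotone G := fun S T ↦ hGmono S T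
  refine ⟨exists_isInTree, Set.ext fun X ↦ forall_congr' fun Y ↦ ?_⟩
  exact minRes_le_minRes_iff hmono (fun b ↦ (hγ b).le) X Y
end

section
/- There is a constant K ∈ ℝ such that for every state X the minimum in-tree resistance satisfies ρ(X) = K − φ(X); equivalently, for all states X and Y one has ρ(X) − ρ(Y) = φ(Y) − φ(X), and min_X ρ(X) = K − max_X φ(X). -/
section SpanningTree

variable {V R : Type*}

/-- The total weight of the edges of a graph for an edge cost `c`; the junk value `0` of the
`finsum` occurs only for graphs with infinitely many edges of nonzero cost. -/
noncomputable def edgeWeight [AddCommMonoid R] (c : Sym2 V → R) (G : SimpleGraph V) : R :=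
  ∑ᶠ e ∈ G.edgeSet, c e

/-- The subgraph of `G` formed by the edges of cost at most `θ`, in which one looks for paths of
bounded bottleneck cost. -/
def sublevelGraph [LE R] (G : SimpleGraph V) (c : Sym2 V → R) (θ : R) : SimpleGraph V where
  Adj a b := G.Adj a b ∧ c s(a, b) ≤ θ
  symm := ⟨fun a _ h => ⟨h.1.symm, Sym2.eq_swap (a := a) ▸ h.2⟩⟩
  loopless := ⟨fun _ h => h.1.ne rfl⟩

theorem sublevelGraph_le [LE R] (G : SimpleGraph V) (c : Sym2 V → R) (θ : R) :
    sublevelGraph G c θ ≤ G :=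
  fun _ _ h => h.1

theorem edgeSet_sup_edge {G : SimpleGraph V} {u v : V} (huv : u ≠ v) :
    (G ⊔ SimpleGraph.edge u v).edgeSet = insert s(u, v) G.edgeSet := by
  rw [SimpleGraph.edgeSet_sup, SimpleGraph.edgeSet_edge_of_ne huv, Set.union_singleton]

theorem exists_adj_not_reachable_of_reachable {G D : SimpleGraph V} {a b : V}
    (hG : G.Reachable a b) (hD : ¬D.Reachable a b) : ∃ u v, G.Adj u v ∧ ¬D.Reachable u v := by
  obtain ⟨p⟩ := hG
  obtain ⟨d, -, hfst, hsnd⟩ :=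
    p.exists_boundary_dart {x | D.Reachable a x} (SimpleGraph.Reachable.refl a) hD
  exact ⟨d.fst, d.snd, d.adj, fun h => hsnd (hfst.trans h)⟩

variable [Finite V]

theorem add_edgeWeight_deleteEdges [AddCommMonoid R] (c : Sym2 V → R) {G : SimpleGraph V}
    {e : Sym2 V} (he : e ∈ G.edgeSet) :
    c e + edgeWeight c (G.deleteEdges {e}) = edgeWeight c G := by
  rw [edgeWeight, SimpleGraph.edgeSet_deleteEdges,
    ← finsum_mem_insert c (by simp) (Set.toFinite _), Set.insert_sdiff_singleton,
    Set.insert_eq_of_mem he, edgeWeight]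

theorem edgeWeight_sup_edge [AddCommMonoid R] (c : Sym2 V → R) {G : SimpleGraph V} {u v : V}
    (huv : u ≠ v) (hG : ¬G.Adj u v) :
    edgeWeight c (G ⊔ SimpleGraph.edge u v) = c s(u, v) + edgeWeight c G := by
  rw [edgeWeight, edgeSet_sup_edge huv, finsum_mem_insert c hG (Set.toFinite _), edgeWeight]

theorem isTree_of_isAcyclic_of_card_edgeSet [Nonempty V] {G : SimpleGraph V}
    (hG : G.IsAcyclic) (hcard : Nat.card G.edgeSet + 1 = Nat.card V) : G.IsTree := by
  obtain ⟨F, hGF, -, hF⟩ :=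
    SimpleGraph.connected_top.exists_isTree_le_of_le_of_isAcyclic le_top hG
  have hcardF := (SimpleGraph.isTree_iff_connected_and_card.1 hF).2
  have hle : F.edgeSet.ncard ≤ G.edgeSet.ncard := by
    rw [← Nat.card_coe_set_eq, ← Nat.card_coe_set_eq]; omega
  have heq : G.edgeSet = F.edgeSet :=
    Set.eq_of_subset_of_ncard_le (SimpleGraph.edgeSet_mono hGF) hle
  rwa [SimpleGraph.edgeSet_injective heq]

theorem isTree_deleteEdges_sup_edge {T : SimpleGraph V} (hT : T.IsTree) {e : Sym2 V}
    (he : e ∈ T.edgeSet) {u v : V} (huv : ¬(T.deleteEdges {e}).Reachable u v) :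
    (T.deleteEdges {e} ⊔ SimpleGraph.edge u v).IsTree := by
  have := hT.connected.nonempty
  have hnotMem : s(u, v) ∉ (T.deleteEdges {e}).edgeSet := fun h => huv h.reachable
  have hne : u ≠ v := fun h => huv (h ▸ SimpleGraph.Reachable.refl u)
  refine isTree_of_isAcyclic_of_card_edgeSet
    ((hT.isAcyclic.anti (T.deleteEdges_le _)).sup_edge_of_not_reachable huv) ?_
  have hcard := (SimpleGraph.isTree_iff_connected_and_card.1 hT).2
  rw [Nat.card_coe_set_eq] at hcard ⊢
  rwa [edgeSet_sup_edge hne, Set.ncard_insert_of_notMem hnotMem, SimpleGraph.edgeSet_deleteEdges,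
    Set.ncard_sdiff_singleton_add_one he]

section Exchange

variable [AddCommMonoid R] [LinearOrder R] [IsOrderedAddMonoid R]
  {c : Sym2 V → R} {H T : SimpleGraph V}

theorem exists_isTree_edgeWeight_le_of_not_adj
    (hH : ∀ a b, (sublevelGraph H c (c s(a, b))).Reachable a b) (hT : T.IsTree) {a b : V}
    (hTab : T.Adj a b) (hHab : ¬H.Adj a b) :
    ∃ T' : SimpleGraph V, T'.IsTree ∧ edgeWeight c T' ≤ edgeWeight c T ∧
      T'.edgeSet \ H.edgeSet ⊂ T.edgeSet \ H.edgeSet := by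
  have hbridge : ¬(T.deleteEdges {s(a, b)}).Reachable a b :=
    SimpleGraph.isBridge_iff.1 (SimpleGraph.isAcyclic_iff_forall_adj_isBridge.1 hT.isAcyclic hTab)
  obtain ⟨u, v, ⟨hHuv, hcuv⟩, huv⟩ := exists_adj_not_reachable_of_reachable (hH a b) hbridge
  refine ⟨T.deleteEdges {s(a, b)} ⊔ SimpleGraph.edge u v,
    isTree_deleteEdges_sup_edge hT hTab huv, ?_, ?_⟩
  · rw [edgeWeight_sup_edge c hHuv.ne fun h => huv h.reachable,
      ← add_edgeWeight_deleteEdges c ((SimpleGraph.mem_edgeSet T).2 hTab)]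
    gcongr
  · rw [edgeSet_sup_edge hHuv.ne, SimpleGraph.edgeSet_deleteEdges,
      Set.insert_sdiff_of_mem _ ((SimpleGraph.mem_edgeSet H).2 hHuv)]
    exact ⟨Set.sdiff_subset_sdiff_left Set.sdiff_subset,
      fun h => (h ⟨hTab, hHab⟩).1.2 rfl⟩

theorem exists_isTree_le_edgeWeight_le
    (hH : ∀ a b, (sublevelGraph H c (c s(a, b))).Reachable a b) (hT : T.IsTree) :
    ∃ T' ≤ H, T'.IsTree ∧ edgeWeight c T' ≤ edgeWeight c T := by
  induction hn : (T.edgeSet \ H.edgeSet).ncard using Nat.strong_induction_on generalizing T with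
  | _ n ih =>
    by_cases hTH : T ≤ H
    · exact ⟨T, hTH, hT, le_rfl⟩
    obtain ⟨a, b, hTab, hHab⟩ : ∃ a b, T.Adj a b ∧ ¬H.Adj a b := by
      simpa [SimpleGraph.le_iff_adj] using hTH
    obtain ⟨T₁, hT₁, hle₁, hssub⟩ := exists_isTree_edgeWeight_le_of_not_adj hH hT hTab hHab
    obtain ⟨T₂, hT₂H, hT₂, hle₂⟩ := ih _ (hn ▸ Set.ncard_lt_ncard hssub) hT₁ rfl
    exact ⟨T₂, hT₂H, hT₂, hle₂.trans hle₁⟩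

theorem exists_isTree_le_forall_edgeWeight_le [Nonempty V]
    (hH : ∀ a b, (sublevelGraph H c (c s(a, b))).Reachable a b) :
    ∃ T₀ ≤ H, T₀.IsTree ∧ ∀ T : SimpleGraph V, T.IsTree → edgeWeight c T₀ ≤ edgeWeight c T := by
  have hconn : H.Connected := ⟨fun a b => (hH a b).mono (sublevelGraph_le H c _)⟩
  obtain ⟨T₀, ⟨hT₀H, hT₀⟩, hmin⟩ :=
    Set.exists_min_image {T | T ≤ H ∧ T.IsTree} (edgeWeight c) (Set.toFinite _)
      hconn.exists_isTree_le
  refine ⟨T₀, hT₀H, hT₀, fun T hT => ?_⟩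
  obtain ⟨T', hT'H, hT', hle⟩ := exists_isTree_le_edgeWeight_le hH hT
  exact (hmin T' ⟨hT'H, hT'⟩).trans hle

end Exchange

end SpanningTree

section ParentMap

variable {V R : Type*} {r : V} {t : V → V}

/-- `t` is the parent function of an in-tree rooted at `r`: iterating `t` from any other vertex
leads to `r`. The value `t r` is irrelevant. -/
def IsParentMap (r : V) (t : V → V) : Prop :=
  ∀ v ≠ r, ∃ n : ℕ, t^[n] v = r

/-- The undirected graph underlying the in-tree with root `r` and parent function `t`. -/
def parentGraph (r : V) (t : V → V) : SimpleGraph V :=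
  SimpleGraph.fromEdgeSet ((fun v => s(v, t v)) '' {r}ᶜ)

theorem IsParentMap.apply_ne (ht : IsParentMap r t) {v : V} (hv : v ≠ r) : t v ≠ v := by
  intro hfix
  obtain ⟨n, hn⟩ := ht v hv
  exact hv ((Function.iterate_fixed hfix n).symm.trans hn)

theorem IsParentMap.adj_parentGraph (ht : IsParentMap r t) {v : V} (hv : v ≠ r) :
    (parentGraph r t).Adj v (t v) :=
  (SimpleGraph.fromEdgeSet_adj _).2 ⟨⟨v, hv, rfl⟩, (ht.apply_ne hv).symm⟩

theorem IsParentMap.edgeSet_parentGraph (ht : IsParentMap r t) :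
    (parentGraph r t).edgeSet = (fun v => s(v, t v)) '' {r}ᶜ := by
  refine (SimpleGraph.edgeSet_fromEdgeSet _).trans (Set.sdiff_subset.antisymm ?_)
  rintro _ ⟨v, hv, rfl⟩
  exact ⟨⟨v, hv, rfl⟩, fun h => ht.apply_ne hv (Sym2.mk_isDiag_iff.1 h).symm⟩

theorem IsParentMap.connected_parentGraph (ht : IsParentMap r t) :
    (parentGraph r t).Connected := by
  have reachable_of_iterate : ∀ (n : ℕ) (v : V), t^[n] v = r →
      (parentGraph r t).Reachable r v := by
    intro n
    induction n with
    | zero => rintro v rfl; exact SimpleGraph.Reachable.refl _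
    | succ n ih =>
      intro v hv
      obtain rfl | hvr := eq_or_ne v r
      · exact SimpleGraph.Reachable.refl _
      · exact (ih (t v) hv).trans (ht.adj_parentGraph hvr).symm.reachable
  refine (SimpleGraph.connected_iff_exists_forall_reachable _).2 ⟨r, fun v => ?_⟩
  obtain rfl | hvr := eq_or_ne v r
  · exact SimpleGraph.Reachable.refl _
  · obtain ⟨n, hn⟩ := ht v hvr
    exact reachable_of_iterate n v hn

theorem IsParentMap.ncard_image_edge [Finite V] (ht : IsParentMap r t) :
    ((fun v => s(v, t v)) '' {r}ᶜ).ncard = ({r}ᶜ : Set V).ncard := by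
  refine (Set.ncard_image_le (Set.toFinite _)).antisymm ?_
  have hcard := ht.connected_parentGraph.card_vert_le_card_edgeSet_add_one
  rw [Nat.card_coe_set_eq, ht.edgeSet_parentGraph] at hcard
  rw [Set.ncard_compl, Set.ncard_singleton]
  omega

theorem IsParentMap.isTree_parentGraph [Finite V] (ht : IsParentMap r t) :
    (parentGraph r t).IsTree := by
  refine SimpleGraph.isTree_iff_connected_and_card.2 ⟨ht.connected_parentGraph, ?_⟩
  rw [Nat.card_coe_set_eq, ht.edgeSet_parentGraph, ht.ncard_image_edge,
    ← Set.ncard_singleton r, Set.ncard_compl_add_ncard]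

theorem IsParentMap.edgeWeight_parentGraph [Fintype V] [DecidableEq V] [AddCommMonoid R]
    (ht : IsParentMap r t) (c : Sym2 V → R) :
    edgeWeight c (parentGraph r t) = ∑ v with v ≠ r, c s(v, t v) := by
  have hinj : Set.InjOn (fun v => s(v, t v)) {r}ᶜ :=
    Set.injOn_of_ncard_image_eq ht.ncard_image_edge
  rw [edgeWeight, ht.edgeSet_parentGraph, finsum_mem_image hinj, ← finsum_mem_coe_finset]
  simp only [Finset.coe_filter, Finset.mem_univ, true_and, Set.compl_singleton_eq]

theorem exists_adj_dist_lt {G : SimpleGraph V} (hG : G.Connected) {v : V} (hv : v ≠ r) :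
    ∃ w, G.Adj v w ∧ G.dist w r < G.dist v r := by
  obtain ⟨p, hp⟩ := hG.exists_walk_length_eq_dist v r
  have hnil : ¬p.Nil := SimpleGraph.Walk.not_nil_of_ne hv
  refine ⟨p.snd, p.adj_snd hnil, ?_⟩
  calc G.dist p.snd r ≤ p.tail.length := SimpleGraph.dist_le _
    _ < p.length := by rw [← p.length_tail_add_one hnil]; exact Nat.lt_succ_self _
    _ = G.dist v r := hp

theorem isParentMap_of_lt (f : V → ℕ) (hf : ∀ v ≠ r, f (t v) < f v) : IsParentMap r t := by
  intro v
  induction hn : f v using Nat.strong_induction_on generalizing v with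
  | _ n ih =>
    intro hv
    obtain htv | htv := eq_or_ne (t v) r
    · exact ⟨1, htv⟩
    · obtain ⟨m, hm⟩ := ih _ (hn ▸ hf v hv) (t v) rfl htv
      exact ⟨m + 1, hm⟩

theorem exists_isParentMap_parentGraph_eq {T : SimpleGraph V} (hT : T.IsTree) (r : V) :
    ∃ t, IsParentMap r t ∧ parentGraph r t = T := by
  have hstep : ∀ v, ∃ w, v ≠ r → T.Adj v w ∧ T.dist w r < T.dist v r := by
    intro v
    by_cases hv : v = r
    · exact ⟨v, fun h => absurd hv h⟩
    · obtain ⟨w, hw⟩ := exists_adj_dist_lt hT.connected hv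
      exact ⟨w, fun _ => hw⟩
  choose t ht using hstep
  have hparent : IsParentMap r t := isParentMap_of_lt (T.dist · r) fun v hv => (ht v hv).2
  have hle : parentGraph r t ≤ T := by
    rw [← SimpleGraph.edgeSet_subset_edgeSet, hparent.edgeSet_parentGraph]
    rintro _ ⟨v, hv, rfl⟩
    exact (ht v hv).1
  exact ⟨t, hparent, (SimpleGraph.isTree_iff_minimal_connected.1 hT).eq_of_le
    hparent.connected_parentGraph hle⟩

end ParentMap

section ReversibleResistance

variable {V R : Type*} [Fintype V] [DecidableEq V] [AddCommGroup R]
  {A : V → V → Prop} {ρ : V → V → R} {φ : V → R} {c : Sym2 V → R}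

theorem sum_resistance_eq (hρ : ∀ a b, A a b → ρ a b = φ a + c s(a, b)) {r : V} {t : V → V}
    (ht : IsParentMap r t) (hA : ∀ v ≠ r, A v (t v)) :
    ∑ v with v ≠ r, ρ v (t v) = ∑ v, φ v + edgeWeight c (parentGraph r t) - φ r := by
  have hsum : ∑ v with v ≠ r, ρ v (t v) = ∑ v with v ≠ r, (φ v + c s(v, t v)) :=
    Finset.sum_congr rfl fun v hv => hρ v (t v) (hA v (Finset.mem_filter.1 hv).2)
  rw [hsum, Finset.sum_add_distrib, ← ht.edgeWeight_parentGraph, Finset.filter_ne',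
    ← Finset.add_sum_erase _ φ (Finset.mem_univ r)]
  abel

theorem exists_forall_isLeast_sum_resistance [Nonempty V] [LinearOrder R] [IsOrderedAddMonoid R]
    {H : SimpleGraph V} (hHA : ∀ a b, H.Adj a b → A a b)
    (hρ : ∀ a b, A a b → ρ a b = φ a + c s(a, b))
    (hH : ∀ a b, (sublevelGraph H c (c s(a, b))).Reachable a b) :
    ∃ K, ∀ r, IsLeast {w | ∃ t, (IsParentMap r t ∧ ∀ v ≠ r, A v (t v)) ∧
      w = ∑ v with v ≠ r, ρ v (t v)} (K - φ r) := by
  obtain ⟨T₀, hT₀H, hT₀, hmin⟩ := exists_isTree_le_forall_edgeWeight_le hH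
  refine ⟨∑ v, φ v + edgeWeight c T₀, fun r => ⟨?_, ?_⟩⟩
  · obtain ⟨t, ht, rfl⟩ := exists_isParentMap_parentGraph_eq hT₀ r
    have hA : ∀ v ≠ r, A v (t v) := fun v hv => hHA _ _ (hT₀H (ht.adj_parentGraph hv))
    exact ⟨t, ⟨ht, hA⟩, (sum_resistance_eq hρ ht hA).symm⟩
  · rintro _ ⟨t, ⟨ht, hA⟩, rfl⟩
    rw [sum_resistance_eq hρ ht hA]
    gcongr
    exact hmin _ ht.isTree_parentGraph

end ReversibleResistance

section SupInfCost

variable {L R : Type*} [Lattice L]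

/-- The symmetric edge cost `f (a ⊔ b) - g (a ⊓ b)` on a lattice, the form taken by the symmetric
part of the resistances. -/
def supInfCost [Sub R] (f g : L → R) : Sym2 L → R :=
  Sym2.lift ⟨fun a b => f (a ⊔ b) - g (a ⊓ b), fun a b => by simp only [sup_comm a, inf_comm a]⟩

theorem supInfCost_mk [Sub R] (f g : L → R) (a b : L) :
    supInfCost f g s(a, b) = f (a ⊔ b) - g (a ⊓ b) :=
  rfl

theorem supInfCost_mk_of_le [Sub R] (f g : L → R) {a b : L} (hab : a ≤ b) :
    supInfCost f g s(a, b) = f b - g a := by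
  rw [supInfCost_mk, sup_eq_right.2 hab, inf_eq_left.2 hab]

variable [LocallyFiniteOrder L] [AddCommGroup R] [PartialOrder R] [IsOrderedAddMonoid R]
  {f g : L → R}

theorem reachable_sublevelGraph_hasse_of_le (hf : Monotone f) (hg : Monotone g) {l a b u : L}
    (hla : l ≤ a) (hab : a ≤ b) (hbu : b ≤ u) :
    (sublevelGraph (SimpleGraph.hasse L) (supInfCost f g) (f u - g l)).Reachable a b := by
  induction le_iff_reflTransGen_covBy.1 hab using Relation.ReflTransGen.head_induction_on with
  | refl => exact SimpleGraph.Reachable.refl _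
  | @head a d had hdb ih =>
    have hdb' : d ≤ b := le_iff_reflTransGen_covBy.2 hdb
    have hcost : supInfCost f g s(a, d) ≤ f u - g l := by
      rw [supInfCost_mk_of_le f g had.le]
      exact sub_le_sub (hf (hdb'.trans hbu)) (hg hla)
    have hadj : (sublevelGraph (SimpleGraph.hasse L) (supInfCost f g) (f u - g l)).Adj a d :=
      ⟨Or.inl had, hcost⟩
    exact hadj.reachable.trans (ih (hla.trans had.le) hdb')

theorem reachable_sublevelGraph_hasse (hf : Monotone f) (hg : Monotone g) (a b : L) :
    (sublevelGraph (SimpleGraph.hasse L) (supInfCost f g)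
      (supInfCost f g s(a, b))).Reachable a b :=
  (reachable_sublevelGraph_hasse_of_le hf hg inf_le_left le_sup_left le_rfl).trans
    (reachable_sublevelGraph_hasse_of_le hf hg inf_le_right le_sup_right le_rfl).symm

end SupInfCost

theorem ciInf_const_sub {ι : Type*} [Nonempty ι] (K : ℝ) {f : ι → ℝ}
    (hf : BddAbove (Set.range f)) : ⨅ i, (K - f i) = K - ⨆ i, f i :=
  (Antitone.map_ciSup_of_continuousAt (f := (K - ·)) (by fun_prop)
    (fun _ _ h => sub_le_sub_left h K) hf).symm

section Caching

variable {B : ℕ} (G : Finset (Fin B) → ℝ) (γ : Fin B → ℝ)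

theorem adm_of_hasse_adj {S T : Finset (Fin B)}
    (h : (SimpleGraph.hasse (Finset (Fin B))).Adj S T) : Adm S T := by
  rcases h with hST | hTS
  · exact Or.inl hST.lt
  · obtain ⟨b, hb, rfl⟩ := Finset.covBy_iff_exists_erase.1 hTS
    exact Or.inr ⟨b, hb, rfl⟩

theorem res_eq_phi_add_supInfCost {S T : Finset (Fin B)} (h : Adm S T) :
    res G γ S T = phi G γ S + supInfCost (fun U => ∑ b ∈ U, γ b) G s(S, T) := by
  rcases h with hST | ⟨b, -, rfl⟩
  · rw [res, if_pos hST, supInfCost_mk_of_le _ _ hST.le, phi, ← Finset.sum_sdiff hST.le]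
    ring
  · have hle : S.erase b ≤ S := Finset.erase_subset b S
    rw [res, if_neg (fun h => h.not_ge hle), Sym2.eq_swap, supInfCost_mk_of_le _ _ hle, phi]
    ring

theorem isInTree_iff {X : Finset (Fin B)} {t : Finset (Fin B) → Finset (Fin B)} :
    IsInTree X t ↔ IsParentMap X t ∧ ∀ S ≠ X, Adm S (t S) := by
  simp only [IsInTree, IsParentMap, forall_and, and_comm]

theorem exists_forall_minRes_eq (hG : Monotone G) (hγ : ∀ b, 0 ≤ γ b) :
    ∃ K, ∀ X, minRes G γ X = K - phi G γ X := by
  have hsum : Monotone fun S : Finset (Fin B) => ∑ b ∈ S, γ b :=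
    fun _ _ hST => Finset.sum_le_sum_of_subset_of_nonneg hST fun b _ _ => hγ b
  obtain ⟨K, hK⟩ := exists_forall_isLeast_sum_resistance (fun _ _ => adm_of_hasse_adj)
    (fun _ _ => res_eq_phi_add_supInfCost G γ) (reachable_sublevelGraph_hasse hsum hG)
  refine ⟨K, fun X => ?_⟩
  simp only [minRes, isInTree_iff, treeRes]
  exact (hK X).csInf_eq

end Caching

/-- Combination of Lemma 4 with Lemma 5: there is a constant K with
ρ(X) = K − φ(X) for every state X; equivalently ρ(X) − ρ(Y) = φ(Y) − φ(X)
for all X, Y, and min_X ρ(X) = K − max_X φ(X). -/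
theorem stmt11 {B : ℕ} (G : Finset (Fin B) → ℝ) (γ : Fin B → ℝ)
    (hG0 : G ∅ = 0)
    (hGmono : ∀ S T : Finset (Fin B), S ⊆ T → G S ≤ G T)
    (hγ : ∀ b, 0 < γ b) :
    ∃ K : ℝ,
      (∀ X : Finset (Fin B), minRes G γ X = K - phi G γ X) ∧
      (∀ X Y : Finset (Fin B),
        minRes G γ X - minRes G γ Y = phi G γ Y - phi G γ X) ∧
      (⨅ X : Finset (Fin B), minRes G γ X) =
        K - ⨆ X : Finset (Fin B), phi G γ X := by
  obtain ⟨K, hK⟩ := exists_forall_minRes_eq G γ (fun S T => hGmono S T) fun b => (hγ b).le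
  refine ⟨K, hK, fun X Y => ?_, ?_⟩
  · rw [hK X, hK Y, sub_sub_sub_cancel_left]
  · simp only [hK]
    exact ciInf_const_sub K (Set.finite_range _).bddAbove
end
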